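/- Let ν be a radial weight in D̂. Then there exists a radial weight ω such that P_ω : L^∞_ν̂ → H^∞_ν̂ is bounded if and only if ν ∈ Ď. In particular, if ν ∈ D̂ \ Ď, then for every radial weight ω the projection P_ω is not bounded from L^∞_ν̂ to H^∞_ν̂. -/

import Mathlib

open MeasureTheory Set Complex
open scoped ENNReal

noncomputable section

/-- The open unit disc in the complex plane. -/
def unitDisc : Set ℂ := Metric.ball 0 1

/-- Tail integral `ω̂(r) = ∫_r^1 ω(s) ds`. -/
def tl (ω : ℝ → ℝ) (r : ℝ) : ℝ := ∫ s in r..1, ω s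

/-- Moment `ω_x = ∫_0^1 s^x ω(s) ds` (real power in the exponent). -/
def mom (ω : ℝ → ℝ) (x : ℝ) : ℝ := ∫ s in (0:ℝ)..1, s ^ x * ω s

/-- `ω` is a radial weight: nonnegative and integrable on `[0,1)`, with positive
tail integrals. -/
def IsRadialWeight (ω : ℝ → ℝ) : Prop :=
  (∀ s ∈ Ico (0:ℝ) 1, 0 ≤ ω s) ∧ IntegrableOn ω (Ico (0:ℝ) 1) ∧
    ∀ r ∈ Ico (0:ℝ) 1, 0 < tl ω r

/-- The upper doubling class `D̂`: `sup_{0≤r<1} ω̂(r)/ω̂((1+r)/2) < ∞`. -/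
def Dhat (ω : ℝ → ℝ) : Prop :=
  ∃ C : ℝ, ∀ r ∈ Ico (0:ℝ) 1, tl ω r ≤ C * tl ω ((1 + r) / 2)

/-- The class `Ď`: there are `K > 1`, `C > 1` with `ω̂(r) ≥ C ω̂(1 - (1-r)/K)`. -/
def Dcheck (ω : ℝ → ℝ) : Prop :=
  ∃ K C : ℝ, 1 < K ∧ 1 < C ∧ ∀ r ∈ Ico (0:ℝ) 1, C * tl ω (1 - (1 - r) / K) ≤ tl ω r

/-- The class `D = D̂ ∩ Ď`. -/
def DD (ω : ℝ → ℝ) : Prop := Dhat ω ∧ Dcheck ω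

/-- The Bergman reproducing kernel `B^ω_z(ζ) = Σ_n (conj z · ζ)^n / (2 ω_{2n+1})`. -/
def bKer (ω : ℝ → ℝ) (z ζ : ℂ) : ℂ :=
  ∑' n : ℕ, (starRingEnd ℂ z * ζ) ^ n / ((2 * mom ω (2 * (n : ℝ) + 1) : ℝ) : ℂ)

/-- The integrand of the Bergman projection. -/
def bInt (ω : ℝ → ℝ) (f : ℂ → ℂ) (z ζ : ℂ) : ℂ :=
  f ζ * starRingEnd ℂ (bKer ω z ζ) * ((ω ‖ζ‖ : ℝ) : ℂ)

/-- The Bergman projection `P_ω f(z) = ∫_𝔻 f(ζ) conj(B^ω_z(ζ)) ω(ζ) dA(ζ)`,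
where `dA` is normalized area measure `dx dy / π`. -/
def bProj (ω : ℝ → ℝ) (f : ℂ → ℂ) (z : ℂ) : ℂ :=
  (Real.pi : ℂ)⁻¹ * ∫ ζ in unitDisc, bInt ω f z ζ

/-- The weighted sup-norm `ess sup_{z ∈ 𝔻} |f(z)| v(|z|)`, valued in `ℝ≥0∞`. -/
def wSup (v : ℝ → ℝ) (f : ℂ → ℂ) : ℝ≥0∞ :=
  essSup (fun z => ENNReal.ofReal (‖f z‖ * v ‖z‖)) (volume.restrict unitDisc)

/-- `P_ω : L^∞_v → H^∞_v` is bounded: there is `C > 0` so that for every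
`f ∈ L^∞_v` the defining integral converges absolutely at every point of `𝔻`,
`P_ω f` is analytic on `𝔻`, and `‖P_ω f‖_{L^∞_v} ≤ C ‖f‖_{L^∞_v}`. -/
def ProjBddH (ω v : ℝ → ℝ) : Prop :=
  ∃ C : ℝ, 0 < C ∧ ∀ f : ℂ → ℂ,
    AEStronglyMeasurable f (volume.restrict unitDisc) → wSup v f < ⊤ →
    (∀ z ∈ unitDisc, IntegrableOn (bInt ω f z) unitDisc) ∧
    DifferentiableOn ℂ (bProj ω f) unitDisc ∧
    wSup v (bProj ω f) ≤ ENNReal.ofReal C * wSup v f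

/-- `P_ω : L^∞_v → B^∞_v` is bounded: there is `C > 0` so that for every
`f ∈ L^∞_v` the defining integral converges absolutely at every point of `𝔻`,
`P_ω f` is analytic on `𝔻`, and `‖P_ω f‖_{B^∞_v} ≤ C ‖f‖_{L^∞_v}`. -/
def ProjBddB (ω v : ℝ → ℝ) : Prop :=
  ∃ C : ℝ, 0 < C ∧ ∀ f : ℂ → ℂ,
    AEStronglyMeasurable f (volume.restrict unitDisc) → wSup v f < ⊤ →
    (∀ z ∈ unitDisc, IntegrableOn (bInt ω f z) unitDisc) ∧
    DifferentiableOn ℂ (bProj ω f) unitDisc ∧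
    ∀ z ∈ unitDisc,
      ENNReal.ofReal ((1 - ‖z‖) * v ‖z‖ * ‖deriv (bProj ω f) z‖) ≤
        ENNReal.ofReal C * wSup v f

/-- The moment condition `sup_{x ≥ 0} (ν_x / ω_{2x}) (ω/ν̂)_x < ∞`. -/
def MomCond (ω ν : ℝ → ℝ) : Prop :=
  ∃ C : ℝ, ∀ x : ℝ, 0 ≤ x →
    mom ν x / mom ω (2 * x) * mom (fun s => ω s / tl ν s) x ≤ C

/-- The tail condition `sup_{0 ≤ r < 1} (ν̂(r)/ω̂(r)) ∫_r^1 ω(s)/ν̂(s) ds < ∞`. -/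
def TailCond (ω ν : ℝ → ℝ) : Prop :=
  ∃ C : ℝ, ∀ r ∈ Ico (0:ℝ) 1, tl ν r / tl ω r * tl (fun s => ω s / tl ν s) r ≤ C


section
open MeasureTheory Set Complex
open scoped ENNReal



lemma rw_int {ν : ℝ → ℝ} (h : IsRadialWeight ν) : IntegrableOn ν (Icc (0:ℝ) 1) := by
  rw [integrableOn_Icc_iff_integrableOn_Ico]; exact h.2.1

lemma tl_cont {ν : ℝ → ℝ} (h : IsRadialWeight ν) : ContinuousOn (tl ν) (Icc (0:ℝ) 1) := by
  have := intervalIntegral.continuousOn_primitive_interval_left (a := 0) (b := 1) (μ := volume)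
    (f := ν) (by rw [uIcc_of_le zero_le_one]; exact rw_int h)
  rwa [uIcc_of_le zero_le_one] at this

lemma rw_ii {ν : ℝ → ℝ} (h : IsRadialWeight ν) {a b : ℝ} (ha : 0 ≤ a) (hab : a ≤ b) (hb : b ≤ 1) :
    IntervalIntegrable ν volume a b := by
  rw [intervalIntegrable_iff_integrableOn_Icc_of_le hab]
  exact (rw_int h).mono_set (Icc_subset_Icc ha hb)

lemma tl_anti {ν : ℝ → ℝ} (h : IsRadialWeight ν) {r t : ℝ} (hr : 0 ≤ r) (hrt : r ≤ t) (ht : t < 1) :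
    tl ν t ≤ tl ν r := by
  unfold tl
  rw [← intervalIntegral.integral_add_adjacent_intervals (rw_ii h hr hrt ht.le)
    (rw_ii h (hr.trans hrt) ht.le le_rfl)]
  have : 0 ≤ ∫ s in r..t, ν s := by
    apply intervalIntegral.integral_nonneg hrt
    intro u hu
    exact h.1 u ⟨hr.trans hu.1, hu.2.trans_lt ht⟩
  linarith

lemma dhat_pow {ν : ℝ → ℝ} (h : IsRadialWeight ν) (hD : Dhat ν) :
    ∃ m : ℕ, 1 ≤ m ∧ ∃ C : ℝ, 1 ≤ C ∧ ∀ r t : ℝ, 0 ≤ r → r ≤ t → t < 1 →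
      tl ν r ≤ C * ((1 - r) / (1 - t)) ^ m * tl ν t := by
  obtain ⟨C, hC⟩ := hD
  obtain ⟨m, hm⟩ := pow_unbounded_of_one_lt (max C 1) (one_lt_two : (1:ℝ) < 2)
  have hC1 : C ≤ 2 ^ m := (le_max_left _ _).trans hm.le
  have hm1 : 1 ≤ m := by
    by_contra hh
    have : m = 0 := by omega
    subst this
    simp at hm
  have key : ∀ j : ℕ, ∀ r : ℝ, 0 ≤ r → r < 1 →
      tl ν r ≤ (2 ^ m) ^ j * tl ν (1 - (1 - r) / 2 ^ j) := by
    intro j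
    induction j with
    | zero => intro r h0 h1; simp
    | succ j ih =>
      intro r h0 h1
      have h2 : (0:ℝ) < 2 ^ j := by positivity
      have h3 : (1 - r) / 2 ^ j ≤ 1 - r := div_le_self (by linarith) (one_le_pow₀ one_le_two)
      have h4 : 0 < (1 - r) / 2 ^ j := div_pos (by linarith) h2
      have hmem : 1 - (1 - r) / 2 ^ j ∈ Ico (0:ℝ) 1 := ⟨by linarith, by linarith⟩
      have h5 := hC _ hmem
      have h6 : (1 + (1 - (1 - r) / 2 ^ j)) / 2 = 1 - (1 - r) / 2 ^ (j + 1) := by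
        rw [pow_succ]; field_simp; ring
      rw [h6] at h5
      have h7 : 0 < tl ν (1 - (1 - r) / 2 ^ (j + 1)) := by
        apply h.2.2
        rw [← h6]; constructor <;> linarith [hmem.1]
      calc tl ν r ≤ _ := ih r h0 h1
        _ ≤ (2 ^ m) ^ j * (2 ^ m * tl ν (1 - (1 - r) / 2 ^ (j + 1))) := by
          gcongr
          exact h5.trans (by gcongr)
        _ = _ := by ring
  refine ⟨m, hm1, 2 ^ m, one_le_pow₀ one_le_two, ?_⟩
  intro r t h0 hrt ht
  have ht' : 0 < 1 - t := by linarith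
  have hx : 1 ≤ (1 - r) / (1 - t) := by rw [le_div_iff₀ ht']; linarith
  obtain ⟨j, hj1, hj2⟩ := exists_nat_pow_near hx (one_lt_two : (1:ℝ) < 2)
  have h1 := key (j + 1) r h0 (by linarith)
  have h2 : (0:ℝ) < 2 ^ (j + 1) := by positivity
  have h3 : t ≤ 1 - (1 - r) / 2 ^ (j + 1) := by
    rw [div_lt_iff₀ ht'] at hj2
    have : (1 - r) / 2 ^ (j + 1) ≤ 1 - t := by
      rw [div_le_iff₀ h2]; nlinarith
    linarith
  have h4 : tl ν (1 - (1 - r) / 2 ^ (j + 1)) ≤ tl ν t :=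
    tl_anti h (h0.trans hrt) h3 (by have : 0 < (1 - r) / 2 ^ (j + 1) := div_pos (by linarith) h2
                                    linarith)
  have h5 : 0 < tl ν t := h.2.2 t ⟨h0.trans hrt, ht⟩
  calc tl ν r ≤ _ := h1
    _ ≤ (2 ^ m) ^ (j + 1) * tl ν t := by gcongr
    _ = 2 ^ m * (2 ^ j) ^ m * tl ν t := by rw [← pow_mul, ← pow_mul, ← pow_add]; congr 2; ring
    _ ≤ _ := by gcongr

lemma dcheck_pow {ν : ℝ → ℝ} (h : IsRadialWeight ν) (hD : Dcheck ν) :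
    ∃ α : ℝ, 0 < α ∧ α ≤ 1 ∧ ∃ C : ℝ, 1 ≤ C ∧ ∀ r t : ℝ, 0 ≤ r → r ≤ t → t < 1 →
      tl ν t ≤ C * ((1 - t) / (1 - r)) ^ α * tl ν r := by
  obtain ⟨K, C, hK, hC, hKC⟩ := hD
  have key : ∀ j : ℕ, ∀ r : ℝ, 0 ≤ r → r < 1 →
      C ^ j * tl ν (1 - (1 - r) / K ^ j) ≤ tl ν r := by
    intro j
    induction j with
    | zero => intro r h0 h1; simp
    | succ j ih =>
      intro r h0 h1
      have h2 : (0:ℝ) < K ^ j := by positivity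
      have h3 : (1 - r) / K ^ j ≤ 1 - r := div_le_self (by linarith) (one_le_pow₀ hK.le)
      have h4 : 0 < (1 - r) / K ^ j := div_pos (by linarith) h2
      have hmem : 1 - (1 - r) / K ^ j ∈ Ico (0:ℝ) 1 := ⟨by linarith, by linarith⟩
      have h5 := hKC _ hmem
      have h6 : 1 - (1 - (1 - (1 - r) / K ^ j)) / K = 1 - (1 - r) / K ^ (j + 1) := by
        rw [pow_succ]; field_simp; ring
      rw [h6] at h5
      calc C ^ (j+1) * tl ν (1 - (1 - r) / K ^ (j + 1)) 
          = C ^ j * (C * tl ν (1 - (1 - r) / K ^ (j + 1))) := by ring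
        _ ≤ C ^ j * tl ν (1 - (1 - r) / K ^ j) := by gcongr
        _ ≤ _ := ih r h0 h1
  have hlK := Real.log_pos hK
  have hlC := Real.log_pos hC
  set α := min 1 (Real.log C / Real.log K) with hα
  have hα0 : 0 < α := lt_min one_pos (div_pos hlC hlK)
  have hKα : K ^ α ≤ C := by
    calc K ^ α ≤ K ^ (Real.log C / Real.log K) :=
          Real.rpow_le_rpow_of_exponent_le hK.le (min_le_right _ _)
      _ = C := by
          rw [Real.rpow_def_of_pos (by linarith), mul_div_cancel₀ _ hlK.ne', Real.exp_log (by linarith)]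
  refine ⟨α, hα0, min_le_left _ _, C, hC.le, ?_⟩
  intro r t h0 hrt ht
  have ht' : 0 < 1 - t := by linarith
  have hr' : 0 < 1 - r := by linarith
  have hx : 1 ≤ (1 - r) / (1 - t) := by rw [le_div_iff₀ ht']; linarith
  obtain ⟨j, hj1, hj2⟩ := exists_nat_pow_near hx hK
  have hj : (0:ℝ) < K ^ j := by positivity
  have h1 := key j r h0 (by linarith)
  have h3 : 1 - (1 - r) / K ^ j ≤ t := by
    rw [le_div_iff₀ ht'] at hj1
    have : 1 - t ≤ (1 - r) / K ^ j := by
      rw [le_div_iff₀ hj]; linarith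
    linarith
  have h3' : (1 - r) / K ^ j ≤ 1 - r := div_le_self (by linarith) (one_le_pow₀ hK.le)
  have h4 := tl_anti h (by linarith) h3 ht
  have h5 : C ^ j * tl ν t ≤ tl ν r := le_trans (by gcongr) h1
  have h6 : 0 < tl ν r := h.2.2 r ⟨h0, by linarith⟩
  have h7 : ((1 - r) / (1 - t)) ^ α ≤ C ^ (j + 1) := by
    calc ((1 - r) / (1 - t)) ^ α ≤ (K ^ (j + 1)) ^ α := by gcongr
      _ = (K ^ α) ^ (j + 1) := by
        rw [← Real.rpow_natCast, ← Real.rpow_natCast, ← Real.rpow_mul (by linarith),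
          ← Real.rpow_mul (by linarith), mul_comm]
      _ ≤ _ := by gcongr
  have h8 : ((1 - t) / (1 - r)) ^ α = (((1 - r) / (1 - t)) ^ α)⁻¹ := by
    rw [← Real.inv_rpow (by positivity), inv_div]
  have h9 : 0 < ((1 - r) / (1 - t)) ^ α := by positivity
  rw [h8]
  have : tl ν t ≤ (C ^ j)⁻¹ * tl ν r := by
    rw [inv_mul_eq_div, le_div_iff₀ (by positivity)]; linarith
  refine this.trans ?_
  gcongr
  rw [← div_eq_mul_inv, le_div_iff₀ h9, inv_mul_eq_div, div_le_iff₀ (by positivity)]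
  linarith [pow_succ C j]


lemma mom_eq (ω : ℝ → ℝ) (n : ℕ) :
    mom ω (2 * (n : ℝ) + 1) = ∫ s in Ioo (0:ℝ) 1, s ^ (2 * n + 1) * ω s := by
  unfold mom
  rw [intervalIntegral.integral_of_le zero_le_one, integral_Ioc_eq_integral_Ioo]
  congr 1; ext s; congr 1
  rw [← Real.rpow_natCast]; congr 1; push_cast; ring

lemma pow_mul_int {ω : ℝ → ℝ} {a b : ℝ} (h : IntegrableOn ω (Ioo a b)) (ha : 0 ≤ a) (hb : b ≤ 1) (k : ℕ) :
    IntegrableOn (fun s => s ^ k * ω s) (Ioo a b) := by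
  refine Integrable.mono' h.norm ?_ ?_
  · exact (by fun_prop : Measurable fun s : ℝ => s ^ k).aestronglyMeasurable.mul h.1
  · filter_upwards [ae_restrict_mem measurableSet_Ioo] with s hs
    rw [norm_mul]
    have : ‖s ^ k‖ ≤ 1 := by
      rw [norm_pow, Real.norm_of_nonneg (ha.trans hs.1.le)]
      exact pow_le_one₀ (ha.trans hs.1.le) (hs.2.le.trans hb)
    nlinarith [norm_nonneg (ω s)]

lemma mom_ge {ω : ℝ → ℝ} (h : IsRadialWeight ω) (n : ℕ) {q : ℝ} (hq0 : 0 < q) (hq1 : q < 1) :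
    q ^ (2 * n + 1) * tl ω q ≤ mom ω (2 * (n : ℝ) + 1) := by
  have hI : IntegrableOn ω (Ioo (0:ℝ) 1) := h.2.1.mono_set Ioo_subset_Ico_self
  rw [mom_eq]
  unfold tl
  rw [intervalIntegral.integral_of_le hq1.le, integral_Ioc_eq_integral_Ioo, ← integral_const_mul]
  have hsub : Ioo q 1 ⊆ Ioo (0:ℝ) 1 := Ioo_subset_Ioo_left hq0.le
  calc ∫ s in Ioo q 1, q ^ (2 * n + 1) * ω s ≤ ∫ s in Ioo q 1, s ^ (2 * n + 1) * ω s := by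
        apply setIntegral_mono_on ((hI.mono_set hsub).const_mul _)
          (pow_mul_int (hI.mono_set hsub) hq0.le le_rfl _) measurableSet_Ioo
        intro s hs
        have := h.1 s ⟨(hq0.trans hs.1).le, hs.2⟩
        have := hs.1.le
        gcongr
    _ ≤ _ := by
        apply setIntegral_mono_set (pow_mul_int hI le_rfl le_rfl _)
        · filter_upwards [ae_restrict_mem measurableSet_Ioo] with s hs
          exact mul_nonneg (pow_nonneg hs.1.le _) (h.1 s ⟨hs.1.le, hs.2⟩)
        · exact hsub.eventuallyLE

lemma mom_pos {ω : ℝ → ℝ} (h : IsRadialWeight ω) (n : ℕ) : 0 < mom ω (2 * (n : ℝ) + 1) := by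
  refine lt_of_lt_of_le ?_ (mom_ge h n (q := 1/2) (by norm_num) (by norm_num))
  have := h.2.2 (1/2) ⟨by norm_num, by norm_num⟩
  positivity

lemma mom_summable {ω : ℝ → ℝ} (h : IsRadialWeight ω) {x : ℝ} (hx0 : 0 ≤ x) (hx1 : x < 1) :
    Summable (fun n : ℕ => x ^ n / (2 * mom ω (2 * (n : ℝ) + 1))) := by
  set q := Real.sqrt ((1 + x) / 2) with hq
  have hq2 : q ^ 2 = (1 + x) / 2 := Real.sq_sqrt (by linarith)
  have hq0 : 0 < q := Real.sqrt_pos.2 (by linarith)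
  have hq1 : q < 1 := by nlinarith
  have ht : 0 < tl ω q := h.2.2 q ⟨hq0.le, hq1⟩
  have hg : Summable (fun n : ℕ => (x / q ^ 2) ^ n * (2 * q * tl ω q)⁻¹) := by
    apply Summable.mul_right
    apply summable_geometric_of_lt_one (by positivity)
    rw [div_lt_one (by positivity)]; linarith
  refine Summable.of_nonneg_of_le (fun n => ?_) (fun n => ?_) hg
  · have := mom_pos h n; positivity
  · have h1 := mom_ge h n hq0 hq1
    calc x ^ n / (2 * mom ω (2 * (n : ℝ) + 1)) ≤ x ^ n / (2 * (q ^ (2 * n + 1) * tl ω q)) := by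
          gcongr
      _ = _ := by rw [div_pow, ← pow_mul, pow_succ]; field_simp

lemma bKer_zero (ω : ℝ → ℝ) (ζ : ℂ) : bKer ω 0 ζ = ((2 * mom ω (2 * ((0:ℕ):ℝ) + 1) : ℝ) : ℂ)⁻¹ := by
  unfold bKer
  rw [tsum_eq_single 0]
  · simp
  · intro n hn; simp [hn]

lemma int_of_bInt {ω : ℝ → ℝ} (h : IsRadialWeight ω) {f : ℂ → ℂ}
    (hf : IntegrableOn (bInt ω f 0) unitDisc) :
    IntegrableOn (fun ζ => f ζ * ((ω ‖ζ‖ : ℝ) : ℂ)) unitDisc := by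
  have h1 := hf.const_mul ((2 * mom ω (2 * ((0:ℕ):ℝ) + 1) : ℝ) : ℂ)
  refine h1.congr (Filter.Eventually.of_forall fun ζ => ?_)
  have h0 : ((2 * mom ω (2 * ((0:ℕ):ℝ) + 1) : ℝ) : ℂ) ≠ 0 := by
    have := mom_pos h 0
    exact_mod_cast (by positivity : (2 * mom ω (2 * ((0:ℕ):ℝ) + 1) : ℝ) ≠ 0)
  simp only [bInt, bKer_zero, map_inv₀, Complex.conj_ofReal]
  field_simp

lemma meas_unitDisc : MeasurableSet unitDisc := Metric.isOpen_ball.measurableSet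

lemma mem_unitDisc {z : ℂ} : z ∈ unitDisc ↔ ‖z‖ < 1 := by simp [unitDisc]

lemma bProj_hasSum {ω : ℝ → ℝ} (h : IsRadialWeight ω) {f : ℂ → ℂ}
    (hf : IntegrableOn (fun ζ => f ζ * ((ω ‖ζ‖ : ℝ) : ℂ)) unitDisc) {z : ℂ} (hz : ‖z‖ < 1) :
    HasSum (fun n : ℕ => (Real.pi : ℂ)⁻¹ * (z ^ n / ((2 * mom ω (2 * (n : ℝ) + 1) : ℝ) : ℂ) *
      ∫ ζ in unitDisc, f ζ * ((ω ‖ζ‖ : ℝ) : ℂ) * (starRingEnd ℂ ζ) ^ n)) (bProj ω f z) := by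
  unfold bProj
  apply HasSum.mul_left
  have hint : ∀ n : ℕ, IntegrableOn
      (fun ζ => f ζ * ((ω ‖ζ‖ : ℝ) : ℂ) * (starRingEnd ℂ ζ) ^ n) unitDisc := by
    intro n
    refine Integrable.mono' hf.norm ?_ ?_
    · exact hf.1.mul (by fun_prop : Continuous fun ζ : ℂ => (starRingEnd ℂ ζ) ^ n).aestronglyMeasurable
    · filter_upwards [ae_restrict_mem meas_unitDisc] with ζ hζ
      rw [norm_mul _ (_ ^ n), norm_pow, RCLike.norm_conj]
      exact mul_le_of_le_one_right (norm_nonneg _) (pow_le_one₀ (norm_nonneg _) (mem_unitDisc.1 hζ).le)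
  have hbd : ∀ n : ℕ, ∫ ζ in unitDisc, ‖f ζ * ((ω ‖ζ‖ : ℝ) : ℂ) * (starRingEnd ℂ ζ) ^ n‖ ≤
      ∫ ζ in unitDisc, ‖f ζ * ((ω ‖ζ‖ : ℝ) : ℂ)‖ := by
    intro n
    apply setIntegral_mono_on (hint n).norm hf.norm meas_unitDisc
    intro ζ hζ
    rw [norm_mul _ (_ ^ n), norm_pow, RCLike.norm_conj]
    exact mul_le_of_le_one_right (norm_nonneg _) (pow_le_one₀ (norm_nonneg _) (mem_unitDisc.1 hζ).le)
  have hs := hasSum_integral_of_summable_integral_norm (μ := volume.restrict unitDisc)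
    (F := fun (n : ℕ) ζ => z ^ n / ((2 * mom ω (2 * (n : ℝ) + 1) : ℝ) : ℂ) *
      (f ζ * ((ω ‖ζ‖ : ℝ) : ℂ) * (starRingEnd ℂ ζ) ^ n)) (fun n => (hint n).const_mul _) ?_
  · simp_rw [integral_const_mul] at hs
    have he : ∫ ζ in unitDisc, bInt ω f z ζ = ∫ ζ in unitDisc, ∑' n : ℕ,
        z ^ n / ((2 * mom ω (2 * (n : ℝ) + 1) : ℝ) : ℂ) *
      (f ζ * ((ω ‖ζ‖ : ℝ) : ℂ) * (starRingEnd ℂ ζ) ^ n) := by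
      congr 1; ext ζ
      unfold bInt bKer
      rw [← Complex.conjCLE_apply, ContinuousLinearEquiv.map_tsum, ← tsum_mul_left, ← tsum_mul_right]
      congr 1; ext n
      simp only [Complex.conjCLE_apply, map_div₀, map_pow, map_mul, Complex.conj_conj,
        Complex.conj_ofReal, mul_pow]
      ring
    rw [he]
    exact hs
  · have := (mom_summable h (norm_nonneg z) hz).mul_right
      (∫ ζ in unitDisc, ‖f ζ * ((ω ‖ζ‖ : ℝ) : ℂ)‖)
    refine Summable.of_nonneg_of_le (fun n => integral_nonneg fun _ => norm_nonneg _) (fun n => ?_) this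
    have hm := mom_pos h n
    simp_rw [norm_mul (z ^ n / ((2 * mom ω (2 * (n : ℝ) + 1) : ℝ) : ℂ))]
    rw [integral_const_mul, norm_div, norm_pow, Complex.norm_real, Real.norm_of_nonneg (by positivity)]
    exact mul_le_mul_of_nonneg_left (hbd n) (by positivity)

lemma ang_int (n : ℕ) : ∫ θ in Ioo (-Real.pi) Real.pi, (-I * (θ:ℂ)) * (starRingEnd ℂ (Complex.exp (θ * I))) ^ n
    = 2 * Real.pi * ((-1) ^ n / n) := by
  rw [← integral_Ioc_eq_integral_Ioo, ← intervalIntegral.integral_of_le (by linarith [Real.pi_pos])]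
  have hconj : ∀ θ : ℝ, (starRingEnd ℂ (Complex.exp (θ * I))) ^ n = Complex.exp (-(n * I) * θ) := by
    intro θ
    rw [← Complex.exp_conj, ← Complex.exp_nat_mul]; congr 1; simp; ring
  simp_rw [hconj]
  rcases Nat.eq_zero_or_pos n with rfl | hn
  · have h0 : ∫ x in (-Real.pi)..Real.pi, (x : ℂ) = 0 := by
      rw [intervalIntegral.integral_ofReal]; simp
    simp [h0]
  have hn0 : (n : ℂ) ≠ 0 := by exact_mod_cast hn.ne'
  have hd : ∀ x ∈ uIcc (-Real.pi) Real.pi, HasDerivAt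
      (fun θ : ℝ => ((θ:ℂ) / n - I / n ^ 2) * Complex.exp (-(n * I) * θ))
      ((-I * (x:ℂ)) * Complex.exp (-(n * I) * x)) x := by
    intro x _
    have h1 : HasDerivAt (fun θ : ℝ => (θ : ℂ)) 1 x := by
      simpa using (hasDerivAt_id (x:ℂ)).comp_ofReal
    have h2 : HasDerivAt (fun θ : ℝ => Complex.exp (-(n * I) * θ))
      (Complex.exp (-(n * I) * x) * (-(n * I) * 1)) x := (h1.const_mul (-(n * I))).cexp
    have h3 := ((h1.div_const (n:ℂ)).sub_const (I / n ^ 2)).mul h2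
    refine h3.congr_deriv ?_
    field_simp
    ring_nf
    simp only [Complex.I_sq]
    ring
  rw [intervalIntegral.integral_eq_sub_of_hasDerivAt hd (by apply Continuous.intervalIntegrable; fun_prop)]
  have e1 : Complex.exp (-(n * I) * (Real.pi : ℝ)) = (-1) ^ n := by
    rw [show -(n * I) * ((Real.pi : ℝ) : ℂ) = n * (-(Real.pi * I)) by ring, Complex.exp_nat_mul,
      Complex.exp_neg, Complex.exp_pi_mul_I]; norm_num
  have e2 : Complex.exp (-(n * I) * ((-Real.pi : ℝ):ℂ)) = (-1) ^ n := by
    rw [show -(n * I) * ((-Real.pi : ℝ) : ℂ) = n * (Real.pi * I) by push_cast; ring, Complex.exp_nat_mul,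
      Complex.exp_pi_mul_I]
  rw [e1, e2]
  push_cast
  ring

/-- polar coordinates for the test function -/
lemma disc_int (σ : ℝ → ℝ) (n : ℕ) :
    ∫ ζ in unitDisc, (-I * ((Complex.arg ζ : ℝ) : ℂ)) * ((σ ‖ζ‖ : ℝ) : ℂ) * (starRingEnd ℂ ζ) ^ n
      = ((∫ s in Ioo (0:ℝ) 1, s ^ (n + 1) * σ s : ℝ) : ℂ) * (2 * Real.pi * ((-1) ^ n / n)) := by
  rw [← integral_indicator meas_unitDisc, ← Complex.integral_comp_polarCoord_symm, ← ang_int n]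
  have hz : ∀ g : ℝ → ℂ, ∫ s in Ioo (0:ℝ) 1, g s = ∫ s in Ioi (0:ℝ), (Iio 1).indicator g s := by
    intro g
    rw [setIntegral_indicator measurableSet_Iio]; rfl
  have hr : ((∫ s in Ioo (0:ℝ) 1, s ^ (n + 1) * σ s : ℝ) : ℂ) =
      ∫ s in Ioi (0:ℝ), (Iio (1:ℝ)).indicator (fun s => ((s ^ (n + 1) * σ s : ℝ) : ℂ)) s := by
    rw [← hz]; exact integral_ofReal.symm
  rw [hr, ← setIntegral_prod_mul, ← Measure.volume_eq_prod]
  apply setIntegral_congr_fun (measurableSet_Ioi.prod measurableSet_Ioo)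
  rintro ⟨ρ, θ⟩ ⟨hρ, hθ⟩
  simp only [mem_Ioi, mem_Ioo] at hρ hθ
  have hs : Complex.polarCoord.symm (ρ, θ) = ρ * Complex.exp (θ * I) := by
    rw [Complex.polarCoord_symm_apply, Complex.exp_mul_I]; simp
  simp only [hs]
  have hn : ‖(ρ:ℂ) * Complex.exp (θ * I)‖ = ρ := by
    rw [norm_mul, Complex.norm_exp_ofReal_mul_I, Complex.norm_real, Real.norm_of_nonneg hρ.le, mul_one]
  have ha : Complex.arg ((ρ:ℂ) * Complex.exp (θ * I)) = θ := by
    rw [Complex.exp_mul_I]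
    exact Complex.arg_mul_cos_add_sin_mul_I hρ ⟨hθ.1, hθ.2.le⟩
  by_cases h1 : ρ < 1
  · rw [indicator_of_mem (mem_unitDisc.2 (by rwa [hn])), indicator_of_mem (by exact h1), hn, ha]
    simp [mul_pow]
    ring
  · rw [indicator_of_notMem (by rw [mem_unitDisc, hn]; exact h1), indicator_of_notMem (by exact h1)]
    simp


lemma wSup_le_of {v : ℝ → ℝ} {f : ℂ → ℂ} {M : ℝ} (h : ∀ z ∈ unitDisc, ‖f z‖ * v ‖z‖ ≤ M) :
    wSup v f ≤ ENNReal.ofReal M := by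
  refine essSup_le_of_ae_le _ ?_
  filter_upwards [ae_restrict_mem meas_unitDisc] with z hz
  exact ENNReal.ofReal_le_ofReal (h z hz)

lemma tlnorm_cont {ν : ℝ → ℝ} (h : IsRadialWeight ν) : ContinuousOn (fun z : ℂ => tl ν ‖z‖) unitDisc :=
  (tl_cont h).comp continuous_norm.continuousOn
    (fun z hz => ⟨norm_nonneg z, (mem_unitDisc.1 hz).le⟩)

lemma tlnorm_pos {ν : ℝ → ℝ} (h : IsRadialWeight ν) {z : ℂ} (hz : z ∈ unitDisc) : 0 < tl ν ‖z‖ :=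
  h.2.2 _ ⟨norm_nonneg z, mem_unitDisc.1 hz⟩

lemma ptwise_of_wSup {ν : ℝ → ℝ} (h : IsRadialWeight ν) {g : ℂ → ℂ} (hg : ContinuousOn g unitDisc)
    {M : ℝ} (hM : 0 ≤ M) (hw : wSup (tl ν) g ≤ ENNReal.ofReal M) {z : ℂ} (hz : z ∈ unitDisc) :
    ‖g z‖ * tl ν ‖z‖ ≤ M := by
  have hopen : IsOpen unitDisc := Metric.isOpen_ball
  have hc : ContinuousOn (fun z => ‖g z‖ * tl ν ‖z‖) unitDisc := hg.norm.mul (tlnorm_cont h)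
  have hU : IsOpen (unitDisc ∩ (fun z => ‖g z‖ * tl ν ‖z‖) ⁻¹' Ioi M) :=
    hc.isOpen_inter_preimage hopen isOpen_Ioi
  have hae : ∀ᵐ z ∂(volume.restrict unitDisc), ENNReal.ofReal (‖g z‖ * tl ν ‖z‖) ≤ ENNReal.ofReal M := by
    filter_upwards [ENNReal.ae_le_essSup (μ := volume.restrict unitDisc)
      (fun z => ENNReal.ofReal (‖g z‖ * tl ν ‖z‖))] with z hz
    exact hz.trans hw
  rw [ae_restrict_iff' meas_unitDisc] at hae
  have h0 : volume (unitDisc ∩ (fun z => ‖g z‖ * tl ν ‖z‖) ⁻¹' Ioi M) = 0 := by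
    refine measure_mono_null ?_ hae
    rintro w ⟨hw1, hw2⟩ hcon
    have := hcon hw1
    rw [ENNReal.ofReal_le_ofReal_iff hM] at this
    exact absurd hw2 (not_lt.2 this)
  have := (hU.measure_eq_zero_iff volume).1 h0
  by_contra hcon
  have : z ∈ (∅ : Set ℂ) := this ▸ ⟨hz, not_le.1 hcon⟩
  exact this

lemma norm_int_iff (σ : ℝ → ℝ) (h : IntegrableOn (fun ζ : ℂ => ((σ ‖ζ‖ : ℝ) : ℂ)) unitDisc) :
    IntegrableOn (fun s => s * σ s) (Ioo (0:ℝ) 1) := by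
  have h1 : IntegrableOn (fun ζ : ℂ => σ ‖ζ‖) unitDisc := by
    have := h.re
    simp at this
    exact this
  rw [unitDisc, integrableOn_fun_norm_addHaar] at h1
  simpa using h1

/-- The key moment comparison. -/
lemma sup_pow_tl {ν : ℝ → ℝ} (h : IsRadialWeight ν) (hD : Dhat ν) :
    ∃ C : ℝ, 1 ≤ C ∧ ∀ n : ℕ, ∀ s ∈ Ioo (0:ℝ) 1,
      s ^ n * tl ν s ≤ C * tl ν (1 - 1 / ((n:ℝ) + 1)) := by
  obtain ⟨m, hm, C, hC, hp⟩ := dhat_pow h hD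
  have hfac : (1:ℝ) ≤ m.factorial := by exact_mod_cast Nat.one_le_iff_ne_zero.2 m.factorial_ne_zero
  have hE : 1 ≤ Real.exp 1 := Real.one_le_exp zero_le_one
  have hbig : 1 ≤ C * (Real.exp 1 * m.factorial) := by
    nlinarith [mul_le_mul hE hfac zero_le_one (by linarith)]
  refine ⟨C * (Real.exp 1 * m.factorial), hbig, ?_⟩
  intro n s hs
  have hn : (0:ℝ) < n + 1 := by positivity
  have hn1 : 0 < 1 / ((n:ℝ) + 1) := by positivity
  have hn2 : 1 / ((n:ℝ) + 1) ≤ 1 := by rw [div_le_one hn]; linarith [(Nat.cast_nonneg n : (0:ℝ) ≤ n)]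
  have htp : 0 < tl ν (1 - 1 / ((n:ℝ) + 1)) := h.2.2 _ ⟨by linarith, by linarith⟩
  have htp' : 0 < tl ν s := h.2.2 _ ⟨hs.1.le, hs.2⟩
  rcases le_total (1 - 1 / ((n:ℝ) + 1)) s with hc | hc
  · have h1 := tl_anti h (by linarith) hc hs.2
    have h2 : s ^ n ≤ 1 := pow_le_one₀ hs.1.le hs.2.le
    calc s ^ n * tl ν s ≤ 1 * tl ν (1 - 1 / ((n:ℝ) + 1)) := by gcongr
      _ ≤ _ := by gcongr
  · have h1 := hp s _ hs.1.le hc (by linarith)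
    have hx : (1 - s) / (1 - (1 - 1 / ((n:ℝ) + 1))) = (n + 1) * (1 - s) := by
      field_simp; ring
    rw [hx] at h1
    set x := ((n:ℝ) + 1) * (1 - s) with hxd
    have hx0 : 0 ≤ x := mul_nonneg hn.le (by linarith [hs.2])
    have h2 : s ^ n ≤ Real.exp 1 * Real.exp (-x) := by
      have : s ≤ Real.exp (-(1 - s)) := by
        have := Real.add_one_le_exp (-(1 - s)); linarith
      calc s ^ n ≤ (Real.exp (-(1 - s))) ^ n := by gcongr; exact hs.1.le
        _ = Real.exp (n * (-(1 - s))) := by rw [Real.exp_nat_mul]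
        _ ≤ Real.exp (1 + -x) := by
          apply Real.exp_le_exp.2; rw [hxd]; nlinarith [hs.1, hs.2]
        _ = _ := by rw [Real.exp_add]
    have h3 : x ^ m ≤ m.factorial * Real.exp x := by
      have := Real.pow_div_factorial_le_exp x hx0 m
      rw [div_le_iff₀ (by positivity)] at this; linarith
    calc s ^ n * tl ν s ≤ (Real.exp 1 * Real.exp (-x)) * (C * (m.factorial * Real.exp x) * tl ν (1 - 1 / ((n:ℝ) + 1))) := by
          gcongr
          exact h1.trans (by gcongr)
      _ = C * (Real.exp 1 * m.factorial) * tl ν (1 - 1 / ((n:ℝ) + 1)) * (Real.exp (-x) * Real.exp x) := by ring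
      _ = _ := by rw [← Real.exp_add]; simp

lemma log_sum (N M : ℕ) (hN : 1 ≤ N) (hNM : N ≤ M) :
    Real.log M - Real.log N ≤ ∑ n ∈ Finset.Ico N M, 1 / (n:ℝ) := by
  induction M, hNM using Nat.le_induction with
  | base => simp
  | succ k hk ih =>
    rw [Finset.sum_Ico_succ_top hk]
    have hk0 : (0:ℝ) < k := by exact_mod_cast (by omega : 0 < k)
    have : Real.log ((k+1 : ℕ) : ℝ) - Real.log k ≤ 1 / (k:ℝ) := by
      rw [← Real.log_div (by positivity) hk0.ne']
      have := Real.log_le_sub_one_of_pos (x := ((k+1 : ℕ) : ℝ) / k) (by positivity)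
      refine this.trans (le_of_eq ?_)
      push_cast; field_simp; ring
    linarith

lemma necessity {ν ω : ℝ → ℝ} (hν : IsRadialWeight ν) (hD : Dhat ν) (hω : IsRadialWeight ω)
    (hP : ProjBddH ω (tl ν)) : Dcheck ν := by
  obtain ⟨C, hC, hP⟩ := hP
  obtain ⟨A, hA, hsup⟩ := sup_pow_tl hν hD
  -- the test functions
  have hcinv : ContinuousOn (fun z : ℂ => (((tl ν ‖z‖)⁻¹ : ℝ) : ℂ)) unitDisc := by
    apply Complex.continuous_ofReal.comp_continuousOn
    exact (tlnorm_cont hν).inv₀ (fun z hz => (tlnorm_pos hν hz).ne')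
  have hminv : AEStronglyMeasurable (fun z : ℂ => (((tl ν ‖z‖)⁻¹ : ℝ) : ℂ)) (volume.restrict unitDisc) :=
    hcinv.aestronglyMeasurable meas_unitDisc
  set f : ℂ → ℂ := fun z => (-I * ((Complex.arg z : ℝ) : ℂ)) * (((tl ν ‖z‖)⁻¹ : ℝ) : ℂ) with hf
  have hfm : AEStronglyMeasurable f (volume.restrict unitDisc) := by
    apply AEStronglyMeasurable.mul _ hminv
    exact (by fun_prop : Measurable fun z : ℂ => (-I * ((Complex.arg z : ℝ) : ℂ))).aestronglyMeasurable
  have h0w : wSup (tl ν) (fun z : ℂ => (((tl ν ‖z‖)⁻¹ : ℝ) : ℂ)) ≤ ENNReal.ofReal 1 := by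
    apply wSup_le_of
    intro z hz
    have := tlnorm_pos hν hz
    rw [Complex.norm_real, Real.norm_of_nonneg (by positivity), inv_mul_cancel₀ this.ne']
  have hfw : wSup (tl ν) f ≤ ENNReal.ofReal Real.pi := by
    apply wSup_le_of
    intro z hz
    have := tlnorm_pos hν hz
    rw [hf]
    simp only [norm_mul, Complex.norm_real, norm_neg, Complex.norm_I, one_mul]
    rw [Real.norm_of_nonneg (by positivity : 0 ≤ (tl ν ‖z‖)⁻¹), mul_assoc, inv_mul_cancel₀ this.ne', mul_one]
    exact Complex.abs_arg_le_pi z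
  have h0 : (0:ℂ) ∈ unitDisc := by simp [mem_unitDisc]
  obtain ⟨hi0, -, -⟩ := hP _ hminv (h0w.trans_lt ENNReal.ofReal_lt_top)
  obtain ⟨hif, hdf, hbf⟩ := hP f hfm (hfw.trans_lt ENNReal.ofReal_lt_top)
  have hbf' : wSup (tl ν) (bProj ω f) ≤ ENNReal.ofReal (C * Real.pi) := by
    rw [ENNReal.ofReal_mul hC.le]
    exact hbf.trans (by gcongr)
  have hpt : ∀ z ∈ unitDisc, ‖bProj ω f z‖ * tl ν ‖z‖ ≤ C * Real.pi := fun z hz =>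
    ptwise_of_wSup hν hdf.continuousOn (by positivity) hbf' hz
  have hint0 := int_of_bInt hω (hi0 0 h0)
  have hintf := int_of_bInt hω (hif 0 h0)
  set σ : ℝ → ℝ := fun s => (tl ν s)⁻¹ * ω s with hσ
  have hσ1 : IntegrableOn (fun s => s * σ s) (Ioo (0:ℝ) 1) := by
    apply norm_int_iff
    refine hint0.congr (Filter.Eventually.of_forall fun ζ => ?_)
    simp [hσ]
  have hσn : ∀ n : ℕ, IntegrableOn (fun s => s ^ (n + 1) * σ s) (Ioo (0:ℝ) 1) := by
    intro n
    refine (pow_mul_int hσ1 le_rfl le_rfl n).congr (Filter.Eventually.of_forall fun s => ?_)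
    simp only []; ring
  set S : ℕ → ℝ := fun n => ∫ s in Ioo (0:ℝ) 1, s ^ (n + 1) * σ s with hS
  -- moment comparison
  have hmom : ∀ n : ℕ, mom ω (2 * (n:ℝ) + 1) ≤ A * tl ν (1 - 1 / ((n:ℝ) + 1)) * S n := by
    intro n
    rw [mom_eq, hS, ← integral_const_mul]
    apply setIntegral_mono_on (pow_mul_int (hω.2.1.mono_set Ioo_subset_Ico_self) le_rfl le_rfl _)
      ((hσn n).const_mul _) measurableSet_Ioo
    intro s hs
    have ht : 0 < tl ν s := hν.2.2 s ⟨hs.1.le, hs.2⟩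
    have hω0 := hω.1 s ⟨hs.1.le, hs.2⟩
    have e : s ^ (2 * n + 1) * ω s = (s ^ n * tl ν s) * (s ^ (n + 1) * σ s) := by
      simp only [hσ]; field_simp; ring
    rw [e]
    have : 0 ≤ s ^ (n + 1) * σ s := by
      have := hs.1.le
      simp only [hσ]; positivity
    exact mul_le_mul_of_nonneg_right (hsup n s hs) this
  -- the series
  have hser : ∀ r : ℝ, 0 ≤ r → r < 1 →
      HasSum (fun n : ℕ => r ^ n * (1 / (n:ℝ)) * (S n / mom ω (2 * (n:ℝ) + 1))) (bProj ω f (-(r:ℂ))).re := by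
    intro r hr0 hr1
    have hnr : ‖(-(r:ℂ))‖ < 1 := by rwa [norm_neg, Complex.norm_real, Real.norm_of_nonneg hr0]
    have hs := Complex.reCLM.hasSum (bProj_hasSum hω hintf hnr)
    simp only [Complex.reCLM_apply] at hs
    convert hs using 1
    ext n
    have e : ∀ ζ : ℂ, f ζ * ((ω ‖ζ‖ : ℝ) : ℂ) * (starRingEnd ℂ ζ) ^ n =
        (-I * ((Complex.arg ζ : ℝ) : ℂ)) * ((σ ‖ζ‖ : ℝ) : ℂ) * (starRingEnd ℂ ζ) ^ n := by
      intro ζ; simp only [hf, hσ]; push_cast; ring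
    simp_rw [e]
    rw [disc_int, ← Complex.ofReal_re (r ^ n * (1 / (n:ℝ)) * (S n / mom ω (2 * (n:ℝ) + 1)))]
    congr 1
    rw [neg_pow]
    have hpi : (Real.pi : ℂ) ≠ 0 := by exact_mod_cast Real.pi_ne_zero
    have hone : ((-1:ℂ) ^ n) * (-1) ^ n = 1 := by rw [← mul_pow]; simp
    have hm : (mom ω (2 * (n:ℝ) + 1) : ℂ) ≠ 0 := by exact_mod_cast (mom_pos hω n).ne'
    calc _ = (((-1:ℂ) ^ n) * (-1) ^ n) * ((r:ℂ) ^ n * (1 / n) * (S n / (mom ω (2 * (n:ℝ) + 1)))) := by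
          rw [hone]; push_cast; ring
      _ = _ := by push_cast; field_simp; simp only [hS]
  -- conclusion
  obtain ⟨L, hL⟩ := exists_nat_gt (Real.exp (4 * (C * Real.pi * A)))
  have hB : 0 < C * Real.pi * A := by have := Real.pi_pos; positivity
  have hL1 : (1:ℝ) < L := (Real.one_lt_exp_iff.2 (by linarith)).trans hL
  have hlogL : 4 * (C * Real.pi * A) ≤ Real.log L := by
    rw [Real.le_log_iff_exp_le (by linarith)]; exact hL.le
  refine ⟨4 * L, 2, by linarith, by norm_num, ?_⟩
  intro ρ hρ
  set r := 1 - (1 - ρ) / (4 * L) with hr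
  have hρ1 : 0 < 1 - ρ := by linarith [hρ.2]
  have hδ : 0 < (1 - ρ) / (4 * L) := by positivity
  have hδ1 : (1 - ρ) / (4 * L) ≤ 1 - ρ := div_le_self hρ1.le (by linarith)
  have hr1 : r < 1 := by linarith
  have hr0 : 0 ≤ r := by linarith [hρ.1]
  set N := ⌈1 / (1 - ρ)⌉₊ with hN
  have hx1 : 1 ≤ 1 / (1 - ρ) := by rw [le_div_iff₀ hρ1]; linarith [hρ.1]
  have hN1 : 1 / (1 - ρ) ≤ N := Nat.le_ceil _
  have hN2 : (N:ℝ) < 1 / (1 - ρ) + 1 := Nat.ceil_lt_add_one (by linarith)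
  have hNpos : 1 ≤ N := by exact_mod_cast hx1.trans hN1
  have hLpos : 1 ≤ L := by exact_mod_cast hL1.le
  have htρ : 0 < tl ν ρ := hν.2.2 ρ hρ
  have htr : 0 < tl ν r := hν.2.2 r ⟨hr0, hr1⟩
  have hSM : ∀ n : ℕ, 0 < S n / mom ω (2 * (n:ℝ) + 1) := by
    intro n
    have h1 := mom_pos hω n
    have h2 := hmom n
    have h3 : 0 < tl ν (1 - 1 / ((n:ℝ) + 1)) := by
      have : 1 / ((n:ℝ) + 1) ≤ 1 := by rw [div_le_one (by positivity)]; linarith [(Nat.cast_nonneg n : (0:ℝ) ≤ n)]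
      have : 0 < 1 / ((n:ℝ) + 1) := by positivity
      exact hν.2.2 _ ⟨by linarith, by linarith⟩
    have : 0 < S n := by
      by_contra hcon
      have : A * tl ν (1 - 1 / ((n:ℝ) + 1)) * S n ≤ 0 :=
        mul_nonpos_of_nonneg_of_nonpos (by positivity) (not_lt.1 hcon)
      linarith
    positivity
  have hsum := sum_le_hasSum (Finset.Ico N (N * L)) (fun n _ => by have := (hSM n).le; positivity)
    (hser r hr0 hr1)
  have hterm : ∀ n ∈ Finset.Ico N (N * L), (1 / (2 * (A * tl ν ρ))) * (1 / (n:ℝ)) ≤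
      r ^ n * (1 / (n:ℝ)) * (S n / mom ω (2 * (n:ℝ) + 1)) := by
    intro n hn
    rw [Finset.mem_Ico] at hn
    have hnN : (N:ℝ) ≤ n := by exact_mod_cast hn.1
    have hnNL : (n:ℝ) ≤ N * L := by exact_mod_cast hn.2.le
    have hrn : 1 / 2 ≤ r ^ n := by
      have h1 := one_add_mul_le_pow (a := -((1 - ρ) / (4 * L))) (by linarith [hρ.1]) n
      rw [← sub_eq_add_neg, ← hr] at h1
      have h2 : (n:ℝ) * ((1 - ρ) / (4 * L)) ≤ 1 / 2 := by
        calc (n:ℝ) * ((1 - ρ) / (4 * L)) ≤ (2 * (1 / (1 - ρ)) * L) * ((1 - ρ) / (4 * L)) := by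
              gcongr
              exact hnNL.trans (by gcongr; linarith)
          _ = 1 / 2 := by field_simp; norm_num
      linarith
    have hm := mom_pos hω n
    have h3 : tl ν (1 - 1 / ((n:ℝ) + 1)) ≤ tl ν ρ := by
      apply tl_anti hν hρ.1
      · have : 1 / ((n:ℝ) + 1) ≤ 1 - ρ := by
          rw [div_le_iff₀ (by positivity)]
          have : 1 / (1 - ρ) ≤ n := hN1.trans hnN
          rw [div_le_iff₀ hρ1] at this
          nlinarith
        linarith
      · have : 0 < 1 / ((n:ℝ) + 1) := by positivity
        linarith
    have hSn : 0 < S n := by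
      have := hSM n
      rwa [lt_div_iff₀ hm, zero_mul] at this
    have h4 : 1 / (A * tl ν ρ) ≤ S n / mom ω (2 * (n:ℝ) + 1) := by
      rw [div_le_div_iff₀ (by positivity) hm, one_mul]
      calc _ ≤ _ := hmom n
        _ ≤ A * tl ν ρ * S n := by gcongr
        _ = _ := by ring
    calc (1 / (2 * (A * tl ν ρ))) * (1 / (n:ℝ)) = 1 / 2 * (1 / (n:ℝ)) * (1 / (A * tl ν ρ)) := by
          field_simp
      _ ≤ _ := by gcongr
  have hsum2 := Finset.sum_le_sum hterm
  rw [← Finset.mul_sum] at hsum2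
  have hlog := log_sum N (N * L) hNpos (Nat.le_mul_of_pos_right N (by omega))
  rw [Nat.cast_mul, Real.log_mul (by positivity) (by positivity), add_sub_cancel_left] at hlog
  have hnr : ‖(-(r:ℂ))‖ = r := by rw [norm_neg, Complex.norm_real, Real.norm_of_nonneg hr0]
  have hfin := hpt (-(r:ℂ)) (by rw [mem_unitDisc, hnr]; exact hr1)
  rw [hnr] at hfin
  have hre := Complex.re_le_norm (bProj ω f (-(r:ℂ)))
  have hchain : (1 / (2 * (A * tl ν ρ))) * Real.log L ≤ ‖bProj ω f (-(r:ℂ))‖ :=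
    le_trans (by gcongr) ((hsum2.trans hsum).trans hre)
  have h5 : (1 / (2 * (A * tl ν ρ))) * (4 * (C * Real.pi * A)) * tl ν r ≤ C * Real.pi :=
    le_trans (by gcongr; exact le_trans (by gcongr) hchain) hfin
  have h6 : (1 / (2 * (A * tl ν ρ))) * (4 * (C * Real.pi * A)) * tl ν r = 2 * (C * Real.pi) * tl ν r / tl ν ρ := by
    field_simp; norm_num
  rw [h6, div_le_iff₀ htρ] at h5
  have hCp : 0 < C * Real.pi := by have := Real.pi_pos; positivity
  nlinarith


def sw (N : ℕ) (s : ℝ) : ℝ := (1 - s ^ 2) ^ N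

lemma sw_cont (N : ℕ) : Continuous (sw N) := by unfold sw; fun_prop

lemma sw_rw (N : ℕ) : IsRadialWeight (sw N) := by
  refine ⟨?_, ?_, ?_⟩
  · intro s hs
    apply pow_nonneg
    nlinarith [hs.1, hs.2]
  · exact ((sw_cont N).continuousOn.integrableOn_Icc (μ := volume) (a := 0) (b := 1)).mono_set Ico_subset_Icc_self
  · intro r hr
    apply intervalIntegral.intervalIntegral_pos_of_pos_on ((sw_cont N).intervalIntegrable _ _) _ hr.2
    intro x hx
    apply pow_pos
    nlinarith [hx.1, hx.2, hr.1]

lemma sw_mom_aux (N : ℕ) : ∀ n : ℕ, ∫ s in (0:ℝ)..1, s ^ (2 * n + 1) * sw N s =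
    (n.factorial * N.factorial : ℝ) / (2 * (n + N + 1).factorial) := by
  induction N with
  | zero =>
    intro n
    simp [sw, Nat.factorial_succ]
    have : (n.factorial : ℝ) ≠ 0 := by exact_mod_cast n.factorial_ne_zero
    field_simp
    ring
  | succ N ih =>
    intro n
    have e : ∀ s : ℝ, s ^ (2 * n + 1) * sw (N + 1) s =
        s ^ (2 * n + 1) * sw N s - s ^ (2 * (n + 1) + 1) * sw N s := by
      intro s; unfold sw; ring
    have hc := sw_cont N
    simp_rw [e]
    rw [intervalIntegral.integral_sub (by apply Continuous.intervalIntegrable; fun_prop)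
      (by apply Continuous.intervalIntegrable; fun_prop), ih n, ih (n + 1)]
    have h1 : (n + (N + 1) + 1).factorial = (n + N + 2) * (n + N + 1).factorial := by
      rw [show n + (N + 1) + 1 = (n + N + 1) + 1 by ring, Nat.factorial_succ]
    have h2 : (n + 1 + N + 1).factorial = (n + N + 2) * (n + N + 1).factorial := by
      rw [show n + 1 + N + 1 = (n + N + 1) + 1 by ring, Nat.factorial_succ]
    rw [h1, h2, Nat.factorial_succ N, Nat.factorial_succ n]
    have h3 : ((n + N + 1).factorial : ℝ) ≠ 0 := by exact_mod_cast (n + N + 1).factorial_ne_zero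
    push_cast
    field_simp
    ring

lemma sw_mom (N n : ℕ) : 2 * mom (sw N) (2 * (n : ℝ) + 1) =
    ((N + 1) * (n + (N + 1)).choose (N + 1) : ℝ)⁻¹ := by
  have h := sw_mom_aux N n
  rw [mom_eq, ← integral_Ioc_eq_integral_Ioo, ← intervalIntegral.integral_of_le zero_le_one, h]
  have h4 : (((n + (N + 1)).choose (N + 1) : ℕ) : ℝ) * (N + 1).factorial * n.factorial = (n + N + 1).factorial := by
    have := Nat.choose_mul_factorial_mul_factorial (Nat.le_add_left (N + 1) n)
    rw [Nat.add_sub_cancel] at this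
    exact_mod_cast this
  rw [← h4, Nat.factorial_succ N]
  have h5 : (n.factorial : ℝ) ≠ 0 := by exact_mod_cast n.factorial_ne_zero
  have h6 : (N.factorial : ℝ) ≠ 0 := by exact_mod_cast N.factorial_ne_zero
  have h7 : (((n + (N + 1)).choose (N + 1) : ℕ) : ℝ) ≠ 0 := by
    exact_mod_cast (Nat.choose_pos (Nat.le_add_left (N + 1) n)).ne'
  push_cast
  field_simp

lemma sw_bKer (N : ℕ) {z ζ : ℂ} (h : ‖starRingEnd ℂ z * ζ‖ < 1) :
    bKer (sw N) z ζ = (N + 1) / (1 - starRingEnd ℂ z * ζ) ^ (N + 2) := by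
  have h1 := (hasSum_choose_mul_geometric_of_norm_lt_one (N + 1) h).mul_left ((N:ℂ) + 1)
  unfold bKer
  rw [show ((N:ℂ) + 1) / (1 - starRingEnd ℂ z * ζ) ^ (N + 2) = 
    ((N:ℂ) + 1) * (1 / (1 - starRingEnd ℂ z * ζ) ^ (N + 1 + 1)) by ring, ← h1.tsum_eq]
  congr 1; ext n
  rw [sw_mom]
  push_cast
  rw [div_inv_eq_mul]
  ring

lemma poisson_int {w : ℂ} (hw : ‖w‖ < 1) :
    ∫ θ in (-Real.pi)..Real.pi, 1 / ‖1 - starRingEnd ℂ w * Complex.exp (θ * I)‖ ^ 2 =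
      2 * Real.pi / (1 - ‖w‖ ^ 2) := by
  have h1 := (diffContOnCl_const (c := (1:ℂ)) (s := Metric.ball (0:ℂ) 1) (𝕜 := ℂ)).circleAverage_poissonKernel_smul
    (w := w) (by simpa using hw)
  have hw2 : 0 < 1 - ‖w‖ ^ 2 := by nlinarith [norm_nonneg w]
  rw [Real.circleAverage_def] at h1
  have e : ∀ θ : ℝ, (poissonKernel 0 w • fun _ : ℂ => (1:ℂ)) (circleMap 0 1 θ) =
      (((1 - ‖w‖ ^ 2) * (1 / ‖1 - starRingEnd ℂ w * Complex.exp (θ * I)‖ ^ 2) : ℝ) : ℂ) := by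
    intro θ
    have hn : ‖circleMap 0 1 θ - w‖ = ‖1 - starRingEnd ℂ w * Complex.exp (θ * I)‖ := by
      rw [← RCLike.norm_conj (circleMap 0 1 θ - w)]
      have : 1 - starRingEnd ℂ w * Complex.exp (θ * I) =
          Complex.exp (θ * I) * starRingEnd ℂ (circleMap 0 1 θ - w) := by
        have h2 : Complex.exp (θ * I) * starRingEnd ℂ (Complex.exp (θ * I)) = 1 := by
          rw [← Complex.exp_conj, ← Complex.exp_add]; simp
        simp only [circleMap, map_sub, zero_add, Complex.ofReal_one, one_mul, mul_sub]
        rw [h2]; ring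
      rw [this, norm_mul, Complex.norm_exp_ofReal_mul_I, one_mul]
    simp only [Pi.smul_apply', poissonKernel_def, sub_zero, hn, norm_circleMap_zero]
    simp [div_eq_mul_inv]
  simp_rw [e] at h1
  rw [intervalIntegral.integral_ofReal, intervalIntegral.integral_const_mul] at h1
  have hper : Function.Periodic (fun θ : ℝ => 1 / ‖1 - starRingEnd ℂ w * Complex.exp (θ * I)‖ ^ 2) (2 * Real.pi) := by
    intro θ
    simp only []
    congr 4
    push_cast
    rw [add_mul, Complex.exp_periodic]
  have h2 := hper.intervalIntegral_add_eq (-Real.pi) 0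
  rw [show -Real.pi + 2 * Real.pi = Real.pi by ring, zero_add] at h2
  rw [h2]
  have h3 : (2 * Real.pi)⁻¹ * ((1 - ‖w‖ ^ 2) * ∫ θ in (0:ℝ)..(2 * Real.pi), 1 / ‖1 - starRingEnd ℂ w * Complex.exp (θ * I)‖ ^ 2) = 1 := by
    rw [Complex.real_smul] at h1
    exact_mod_cast h1
  have := Real.pi_pos
  rw [eq_div_iff hw2.ne']
  field_simp at h3
  linarith

lemma one_sub_ne (z ζ : ℂ) : 1 - ‖z‖ * ‖ζ‖ ≤ ‖1 - starRingEnd ℂ z * ζ‖ := by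
  have := norm_sub_norm_le (1:ℂ) (starRingEnd ℂ z * ζ)
  simpa using this

lemma radial_int {a δ : ℝ} (ha : 0 < a) (hδ : 0 < δ) :
    ∫⁻ ρ in Ioo (0:ℝ) 1, ENNReal.ofReal (δ ^ a * (1 - ρ + δ) ^ (-1 - a)) ≤ ENNReal.ofReal (1 / a) := by
  have hcont : ContinuousOn (fun ρ : ℝ => δ ^ a * (1 - ρ + δ) ^ (-1 - a)) (Icc 0 1) := by
    apply ContinuousOn.mul continuousOn_const
    apply ContinuousOn.rpow_const (by fun_prop)
    intro x hx; left; linarith [hx.2]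
  have hd : ∀ x ∈ uIcc (0:ℝ) 1, HasDerivAt (fun ρ : ℝ => δ ^ a * ((1 - ρ + δ) ^ (-a) / a))
      (δ ^ a * (1 - x + δ) ^ (-1 - a)) x := by
    intro x hx
    rw [uIcc_of_le zero_le_one] at hx
    have h1 : HasDerivAt (fun ρ : ℝ => 1 - ρ + δ) (-1) x := by
      simpa using ((hasDerivAt_id x).const_sub 1).add_const δ
    have h2 := (((h1.rpow_const (p := -a) (Or.inl (by linarith [hx.2]))).div_const a).const_mul (δ ^ a))
    refine h2.congr_deriv ?_
    rw [show -a - 1 = -1 - a by ring]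
    field_simp
  rw [← ofReal_integral_eq_lintegral_ofReal]
  · apply ENNReal.ofReal_le_ofReal
    rw [← integral_Ioc_eq_integral_Ioo, ← intervalIntegral.integral_of_le zero_le_one,
      intervalIntegral.integral_eq_sub_of_hasDerivAt hd
        (by apply ContinuousOn.intervalIntegrable; rwa [uIcc_of_le zero_le_one])]
    have h3 : δ ^ a * ((1 - 1 + δ) ^ (-a) / a) = 1 / a := by
      rw [sub_self, zero_add, Real.rpow_neg hδ.le]
      have : 0 < δ ^ a := by positivity
      field_simp
    have h4 : 0 ≤ δ ^ a * ((1 - 0 + δ) ^ (-a) / a) := by positivity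
    linarith
  · exact hcont.integrableOn_Icc.mono_set Ioo_subset_Icc_self
  · filter_upwards [ae_restrict_mem measurableSet_Ioo] with ρ hρ
    have : 0 < 1 - ρ + δ := by linarith [hρ.2]
    simp only [Pi.zero_apply]
    positivity

/-- the kernel integrand for a power -/
def Phi (N : ℕ) (a : ℝ) (z ζ : ℂ) : ℝ :=
  1 / ‖1 - starRingEnd ℂ z * ζ‖ ^ (N + 2) * sw N ‖ζ‖ * ((1 - ‖z‖) / (1 - ‖ζ‖)) ^ a

lemma Phi_meas (N : ℕ) (a : ℝ) (z : ℂ) : Measurable (Phi N a z) := by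
  unfold Phi sw
  fun_prop

lemma Phi_bound (N : ℕ) {a : ℝ} (ha : 0 < a) (haN : a ≤ N) {r ρ : ℝ} (hr0 : 0 ≤ r) (hr1 : r < 1)
    (hρ : ρ ∈ Ioo (0:ℝ) 1) :
    1 / (1 - r * ρ) ^ N * sw N ρ * ((1 - r) / (1 - ρ)) ^ a * (2 * Real.pi / (1 - (r * ρ) ^ 2)) ≤
      2 * Real.pi * 4 ^ (N + 1) * ((1 - r) ^ a * (1 - ρ + (1 - r)) ^ (-1 - a)) := by
  obtain ⟨hρ0, hρ1⟩ := hρ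
  have hπ := Real.pi_pos
  set u := 1 - ρ with hu
  set δ := 1 - r with hδ
  have hu0 : 0 < u := by linarith
  have hδ0 : 0 < δ := by linarith
  have hrρ : 0 ≤ r * ρ := by positivity
  have hh : (u + δ) / 2 ≤ 1 - r * ρ := by nlinarith
  have hs : sw N ρ ≤ 2 ^ N * u ^ N := by
    rw [← mul_pow]
    apply pow_le_pow_left₀ (by nlinarith)
    nlinarith
  have hs0 : 0 ≤ sw N ρ := pow_nonneg (by nlinarith) _
  have hq : 1 - r * ρ ≤ 1 - (r * ρ) ^ 2 := by nlinarith
  have hv : 0 < u + δ := by linarith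
  have h1 : (δ / u) ^ a * u ^ N ≤ δ ^ a * (u + δ) ^ ((N:ℝ) - a) := by
    rw [Real.div_rpow hδ0.le hu0.le, div_mul_eq_mul_div, mul_div_assoc, ← Real.rpow_natCast,
      ← Real.rpow_sub hu0]
    gcongr
    linarith
  have h2 : (u + δ) ^ ((N:ℝ) - a) / (u + δ) ^ (N + 1) = (u + δ) ^ (-1 - a) := by
    rw [← Real.rpow_natCast, ← Real.rpow_sub hv]
    congr 1; push_cast; ring
  calc 1 / (1 - r * ρ) ^ N * sw N ρ * (δ / u) ^ a * (2 * Real.pi / (1 - (r * ρ) ^ 2))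
      ≤ 1 / ((u + δ) / 2) ^ N * (2 ^ N * u ^ N) * (δ / u) ^ a * (2 * Real.pi / ((u + δ) / 2)) := by
        have hq0 : 0 < 1 - (r * ρ) ^ 2 := by linarith
        gcongr
        exact hh.trans hq
    _ = 2 * Real.pi * (2 ^ N * 2 ^ N * 2) * ((δ / u) ^ a * u ^ N) / (u + δ) ^ (N + 1) := by
        rw [div_pow, pow_succ]; field_simp
    _ ≤ 2 * Real.pi * (2 ^ N * 2 ^ N * 2) * (δ ^ a * (u + δ) ^ ((N:ℝ) - a)) / (u + δ) ^ (N + 1) := by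
        gcongr
    _ = 2 * Real.pi * (2 ^ N * 2 ^ N * 2) * (δ ^ a * (u + δ) ^ (-1 - a)) := by
        rw [← h2]; ring
    _ ≤ _ := by
        gcongr
        rw [← mul_pow, pow_succ]
        norm_num

lemma Phi_lint (N : ℕ) {a : ℝ} (ha : 0 < a) (haN : a ≤ N) {z : ℂ} (hz : ‖z‖ < 1) :
    ∫⁻ ζ in unitDisc, ENNReal.ofReal (Phi N a z ζ) ≤ ENNReal.ofReal (2 * Real.pi * 4 ^ (N + 1) * (1 / a)) := by
  have hπ := Real.pi_pos
  rw [← lintegral_indicator meas_unitDisc, ← Complex.lintegral_comp_polarCoord_symm]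
  have hpc : Measurable (fun p : ℝ × ℝ => Complex.polarCoord.symm p) := by
    simp only [Complex.polarCoord_symm_apply]; fun_prop
  have hmeas : Measurable (fun p : ℝ × ℝ => ENNReal.ofReal p.1 •
      unitDisc.indicator (fun ζ => ENNReal.ofReal (Phi N a z ζ)) (Complex.polarCoord.symm p)) := by
    apply Measurable.mul (by fun_prop)
    exact ((Phi_meas N a z).ennreal_ofReal.indicator meas_unitDisc).comp hpc
  rw [polarCoord_target, Measure.volume_eq_prod, ← Measure.prod_restrict, lintegral_prod _ hmeas.aemeasurable]
  calc _ ≤ ∫⁻ ρ in Ioi (0:ℝ), (Iio (1:ℝ)).indicator (fun ρ => ENNReal.ofReal (2 * Real.pi * 4 ^ (N + 1)) *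
          ENNReal.ofReal ((1 - ‖z‖) ^ a * (1 - ρ + (1 - ‖z‖)) ^ (-1 - a))) ρ := by
        apply setLIntegral_mono' measurableSet_Ioi
        intro ρ hρ
        rw [mem_Ioi] at hρ
        have hs : ∀ θ : ℝ, Complex.polarCoord.symm (ρ, θ) = ρ * Complex.exp (θ * I) := by
          intro θ; rw [Complex.polarCoord_symm_apply, Complex.exp_mul_I]; simp
        have hn : ∀ θ : ℝ, ‖(ρ:ℂ) * Complex.exp (θ * I)‖ = ρ := by
          intro θ
          rw [norm_mul, Complex.norm_exp_ofReal_mul_I, Complex.norm_real, Real.norm_of_nonneg hρ.le, mul_one]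
        by_cases h1 : ρ < 1
        · rw [indicator_of_mem (by exact h1)]
          have hw : ‖z * ρ‖ = ‖z‖ * ρ := by rw [norm_mul, Complex.norm_real, Real.norm_of_nonneg hρ.le]
          have hw1 : ‖z * ρ‖ < 1 := by rw [hw]; nlinarith [norm_nonneg z]
          have hpos : ∀ θ : ℝ, 1 - ‖z‖ * ρ ≤ ‖1 - starRingEnd ℂ (z * ρ) * Complex.exp (θ * I)‖ := by
            intro θ
            have := one_sub_ne (z * ρ) (Complex.exp (θ * I))
            rwa [Complex.norm_exp_ofReal_mul_I, mul_one, hw] at this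
          have hp0 : 0 < 1 - ‖z‖ * ρ := by rw [← hw]; linarith
          set B := 1 / (1 - ‖z‖ * ρ) ^ N * sw N ρ * ((1 - ‖z‖) / (1 - ρ)) ^ a with hB
          have hsw : 0 ≤ sw N ρ := pow_nonneg (by nlinarith) _
          have hB0 : 0 ≤ B := by
            have : 0 ≤ (1 - ‖z‖) / (1 - ρ) := div_nonneg (by linarith) (by linarith)
            positivity
          calc _ ≤ ∫⁻ θ in Ioo (-Real.pi) Real.pi, ENNReal.ofReal B *
                ENNReal.ofReal (1 / ‖1 - starRingEnd ℂ (z * ρ) * Complex.exp (θ * I)‖ ^ 2) := by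
                apply lintegral_mono
                intro θ
                simp only [hs]
                rw [indicator_of_mem (mem_unitDisc.2 (by rwa [hn])), smul_eq_mul]
                calc _ ≤ 1 * ENNReal.ofReal (Phi N a z (ρ * Complex.exp (θ * I))) := by
                      gcongr
                      rw [← ENNReal.ofReal_one]; exact ENNReal.ofReal_le_ofReal h1.le
                  _ ≤ _ := by
                      rw [one_mul, ← ENNReal.ofReal_mul hB0]
                      apply ENNReal.ofReal_le_ofReal
                      unfold Phi
                      rw [hn]
                      have e : starRingEnd ℂ z * (ρ * Complex.exp (θ * I)) =
                        starRingEnd ℂ (z * ρ) * Complex.exp (θ * I) := by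
                        rw [map_mul, Complex.conj_ofReal]; ring
                      rw [e]
                      have hp := hpos θ
                      set d := ‖1 - starRingEnd ℂ (z * ρ) * Complex.exp (θ * I)‖ with hd
                      have hd0 : 0 < d := hp0.trans_le hp
                      have : 0 ≤ (1 - ‖z‖) / (1 - ρ) := div_nonneg (by linarith) (by linarith)
                      calc _ = 1 / d ^ N * sw N ρ * ((1 - ‖z‖) / (1 - ρ)) ^ a * (1 / d ^ 2) := by
                            rw [pow_add]; field_simp
                        _ ≤ _ := by rw [hB]; gcongr
            _ = ENNReal.ofReal (B * (2 * Real.pi / (1 - (‖z‖ * ρ) ^ 2))) := by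
                rw [lintegral_const_mul' _ _ ENNReal.ofReal_ne_top, ← ofReal_integral_eq_lintegral_ofReal,
                  ← integral_Ioc_eq_integral_Ioo, ← intervalIntegral.integral_of_le (by linarith),
                  poisson_int hw1, hw, ENNReal.ofReal_mul hB0]
                · refine (ContinuousOn.integrableOn_Icc ?_).mono_set Ioo_subset_Icc_self
                  apply ContinuousOn.div continuousOn_const (by fun_prop)
                  intro θ _
                  exact (pow_pos (hp0.trans_le (hpos θ)) 2).ne'
                · exact Filter.Eventually.of_forall fun θ => by simp only [Pi.zero_apply]; positivity
            _ ≤ _ := by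
                rw [← ENNReal.ofReal_mul (by positivity)]
                exact ENNReal.ofReal_le_ofReal (Phi_bound N ha haN (norm_nonneg z) hz ⟨hρ, h1⟩)
        · rw [indicator_of_notMem (by exact h1)]
          have : ∀ θ : ℝ, unitDisc.indicator (fun ζ => ENNReal.ofReal (Phi N a z ζ)) (Complex.polarCoord.symm (ρ, θ)) = 0 := by
            intro θ
            rw [hs, indicator_of_notMem]; rw [mem_unitDisc, hn]; exact h1
          simp only [this]
          simp
    _ = ENNReal.ofReal (2 * Real.pi * 4 ^ (N + 1)) * ∫⁻ ρ in Ioo (0:ℝ) 1, 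
          ENNReal.ofReal ((1 - ‖z‖) ^ a * (1 - ρ + (1 - ‖z‖)) ^ (-1 - a)) := by
        rw [lintegral_indicator measurableSet_Iio, Measure.restrict_restrict measurableSet_Iio,
          Iio_inter_Ioi, lintegral_const_mul' _ _ ENNReal.ofReal_ne_top]
    _ ≤ _ := by
        rw [ENNReal.ofReal_mul (by positivity : 0 ≤ 2 * Real.pi * 4 ^ (N + 1))]
        gcongr
        exact radial_int ha (by linarith)


lemma sw_bInt_eq (N : ℕ) (f : ℂ → ℂ) {z ζ : ℂ} (hz : ‖z‖ < 1) (hζ : ‖ζ‖ < 1) :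
    bInt (sw N) f z ζ = f ζ * ((sw N ‖ζ‖ : ℝ) : ℂ) * ((N + 1) / (1 - z * starRingEnd ℂ ζ) ^ (N + 2)) := by
  have : ‖starRingEnd ℂ z * ζ‖ < 1 := by
    rw [norm_mul, RCLike.norm_conj]; nlinarith [norm_nonneg z, norm_nonneg ζ]
  unfold bInt
  rw [sw_bKer N this]
  simp only [map_div₀, map_pow, map_sub, map_one, map_mul, Complex.conj_conj, map_add, Complex.conj_natCast]
  ring

lemma norm_one_sub_conj (z ζ : ℂ) : ‖1 - z * starRingEnd ℂ ζ‖ = ‖1 - starRingEnd ℂ z * ζ‖ := by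
  rw [← RCLike.norm_conj]; simp

lemma sw_diff (N : ℕ) (f : ℂ → ℂ)
    (hf : IntegrableOn (fun ζ => f ζ * ((sw N ‖ζ‖ : ℝ) : ℂ)) unitDisc) :
    DifferentiableOn ℂ (bProj (sw N) f) unitDisc := by
  have hopen : IsOpen unitDisc := Metric.isOpen_ball
  set F : ℂ → ℂ → ℂ := fun z ζ => f ζ * ((sw N ‖ζ‖ : ℝ) : ℂ) *
    ((N + 1) / (1 - z * starRingEnd ℂ ζ) ^ (N + 2)) with hF
  set F' : ℂ → ℂ → ℂ := fun z ζ => f ζ * ((sw N ‖ζ‖ : ℝ) : ℂ) *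
    ((N + 1) * (N + 2) * starRingEnd ℂ ζ / (1 - z * starRingEnd ℂ ζ) ^ (N + 3)) with hF'
  have hmF : ∀ z, AEStronglyMeasurable (F z) (volume.restrict unitDisc) := fun z =>
    hf.1.mul (by fun_prop : Measurable fun ζ : ℂ => ((N:ℂ) + 1) / (1 - z * starRingEnd ℂ ζ) ^ (N + 2)).aestronglyMeasurable
  have hmF' : ∀ z, AEStronglyMeasurable (F' z) (volume.restrict unitDisc) := fun z =>
    hf.1.mul (by fun_prop : Measurable fun ζ : ℂ => ((N:ℂ) + 1) * (N + 2) * starRingEnd ℂ ζ / (1 - z * starRingEnd ℂ ζ) ^ (N + 3)).aestronglyMeasurable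
  have hge : ∀ z ζ : ℂ, ‖ζ‖ < 1 → 1 - ‖z‖ ≤ ‖1 - z * starRingEnd ℂ ζ‖ := by
    intro z ζ hζ
    rw [norm_one_sub_conj]
    have := one_sub_ne z ζ
    nlinarith [norm_nonneg z]
  have hcongr : ∀ z ∈ unitDisc, bProj (sw N) f z = (Real.pi : ℂ)⁻¹ * ∫ ζ in unitDisc, F z ζ := by
    intro z hz
    unfold bProj
    congr 1
    apply setIntegral_congr_fun meas_unitDisc
    intro ζ hζ
    exact sw_bInt_eq N f (mem_unitDisc.1 hz) (mem_unitDisc.1 hζ)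
  refine DifferentiableOn.congr ?_ hcongr
  intro z₀ hz₀
  have hz₀' := mem_unitDisc.1 hz₀
  set R := (1 + ‖z₀‖) / 2 with hR
  have hR1 : R < 1 := by linarith
  have hs : Metric.ball (0:ℂ) R ∈ nhds z₀ := Metric.isOpen_ball.mem_nhds (by simp; linarith)
  have hFint : Integrable (F z₀) (volume.restrict unitDisc) := by
    refine Integrable.mono' (hf.norm.mul_const (((N:ℝ) + 1) / (1 - ‖z₀‖) ^ (N + 2))) (hmF z₀) ?_
    filter_upwards [ae_restrict_mem meas_unitDisc] with ζ hζ
    have h1 := hge z₀ ζ (mem_unitDisc.1 hζ)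
    have h0 : 0 < 1 - ‖z₀‖ := by linarith
    simp only [hF]
    rw [norm_mul _ (_ / _), norm_div, norm_pow]
    have : ‖(N:ℂ) + 1‖ = (N:ℝ) + 1 := by exact_mod_cast Complex.norm_natCast (N + 1)
    rw [this]
    gcongr
  have key := hasDerivAt_integral_of_dominated_loc_of_deriv_le (μ := volume.restrict unitDisc)
    (bound := fun ζ => ‖f ζ * ((sw N ‖ζ‖ : ℝ) : ℂ)‖ * (((N:ℝ) + 1) * (N + 2) / (1 - R) ^ (N + 3)))
    hs (Filter.Eventually.of_forall hmF) hFint (hmF' z₀) ?_ (hf.norm.mul_const _) ?_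
  · exact (key.2.differentiableAt.const_mul _).differentiableWithinAt
  · filter_upwards [ae_restrict_mem meas_unitDisc] with ζ hζ
    intro z hz
    have hz' : ‖z‖ < R := by simpa using hz
    have h1 := hge z ζ (mem_unitDisc.1 hζ)
    have h0 : 0 < 1 - R := by linarith
    simp only [hF']
    rw [norm_mul _ (_ / _), norm_div, norm_pow, norm_mul _ (starRingEnd ℂ ζ),
      norm_mul ((N:ℂ) + 1), RCLike.norm_conj]
    have e1 : ‖(N:ℂ) + 1‖ = (N:ℝ) + 1 := by exact_mod_cast Complex.norm_natCast (N + 1)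
    have e2 : ‖(N:ℂ) + 2‖ = (N:ℝ) + 2 := by exact_mod_cast Complex.norm_natCast (N + 2)
    rw [e1, e2]
    refine mul_le_mul_of_nonneg_left (div_le_div₀ (by positivity) ?_ (by positivity)
      (pow_le_pow_left₀ h0.le ?_ _)) (norm_nonneg _)
    · exact mul_le_of_le_one_right (by positivity) (mem_unitDisc.1 hζ).le
    · linarith
  · filter_upwards [ae_restrict_mem meas_unitDisc] with ζ hζ
    intro z hz
    have hz' : ‖z‖ < R := by simpa using hz
    have h1 := hge z ζ (mem_unitDisc.1 hζ)
    have hne : 1 - z * starRingEnd ℂ ζ ≠ 0 := by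
      rw [← norm_pos_iff]; linarith
    simp only [hF, hF']
    apply HasDerivAt.const_mul
    have h2 : HasDerivAt (fun x : ℂ => 1 - x * starRingEnd ℂ ζ) (-(starRingEnd ℂ ζ)) z := by
      simpa using ((hasDerivAt_id z).mul_const (starRingEnd ℂ ζ)).const_sub 1
    have h3 := (((h2.pow (N + 2)).inv (pow_ne_zero _ hne))).const_mul ((N:ℂ) + 1)
    refine h3.congr_deriv ?_
    simp only [Pi.pow_apply]
    push_cast
    field_simp
    ring

lemma sufficiency {ν : ℝ → ℝ} (hν : IsRadialWeight ν) (hD : Dhat ν) (hc : Dcheck ν) :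
    ∃ ω : ℝ → ℝ, IsRadialWeight ω ∧ ProjBddH ω (tl ν) := by
  obtain ⟨N, hN1, C1, hC1, hp1⟩ := dhat_pow hν hD
  obtain ⟨α, hα0, hα1, C2, hC2, hp2⟩ := dcheck_pow hν hc
  have hN1' : (1:ℝ) ≤ N := by exact_mod_cast hN1
  have hπ := Real.pi_pos
  set A := max C1 C2 with hA
  have hA0 : 0 < A := lt_of_lt_of_le (by linarith) (le_max_left C1 C2)
  -- comparison
  have hcomp : ∀ r ρ : ℝ, 0 ≤ r → r < 1 → 0 ≤ ρ → ρ < 1 →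
      (tl ν ρ)⁻¹ ≤ A * (tl ν r)⁻¹ * (((1 - r) / (1 - ρ)) ^ α + ((1 - r) / (1 - ρ)) ^ (N:ℝ)) := by
    intro r ρ hr0 hr1 hρ0 hρ1
    have htr := hν.2.2 r ⟨hr0, hr1⟩
    have htρ := hν.2.2 ρ ⟨hρ0, hρ1⟩
    have hx : 0 ≤ (1 - r) / (1 - ρ) := div_nonneg (by linarith) (by linarith)
    have hmain : tl ν r ≤ A * (((1 - r) / (1 - ρ)) ^ α + ((1 - r) / (1 - ρ)) ^ (N:ℝ)) * tl ν ρ := by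
      have p1 : 0 ≤ ((1 - r) / (1 - ρ)) ^ α := by positivity
      have p2 : 0 ≤ ((1 - r) / (1 - ρ)) ^ (N:ℝ) := by positivity
      rcases le_total r ρ with h | h
      · refine (hp1 r ρ hr0 h hρ1).trans ?_
        rw [← Real.rpow_natCast]
        gcongr
        · exact le_max_left _ _
        · linarith
      · refine (hp2 ρ r hρ0 h hr1).trans ?_
        gcongr
        · exact le_max_right _ _
        · linarith
    rw [inv_eq_one_div, div_le_iff₀ htρ]
    calc 1 = (tl ν r)⁻¹ * tl ν r := (inv_mul_cancel₀ htr.ne').symm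
      _ ≤ (tl ν r)⁻¹ * (A * (((1 - r) / (1 - ρ)) ^ α + ((1 - r) / (1 - ρ)) ^ (N:ℝ)) * tl ν ρ) := by gcongr
      _ = _ := by ring
  set K := 2 * Real.pi * 4 ^ (N + 1) * (1 / α) + 2 * Real.pi * 4 ^ (N + 1) * (1 / (N:ℝ)) with hK
  have hK0 : 0 < K := by positivity
  set C := Real.pi⁻¹ * ((N + 1) * A * K) with hC
  refine ⟨sw N, sw_rw N, C, by positivity, ?_⟩
  intro f hfm hfw
  set M := (wSup (tl ν) f).toReal with hM
  have hM0 : 0 ≤ M := ENNReal.toReal_nonneg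
  have hMw : ENNReal.ofReal M = wSup (tl ν) f := ENNReal.ofReal_toReal hfw.ne
  have hfb : ∀ᵐ ζ ∂(volume.restrict unitDisc), ‖f ζ‖ * tl ν ‖ζ‖ ≤ M := by
    filter_upwards [ENNReal.ae_le_essSup (μ := volume.restrict unitDisc)
      (fun z => ENNReal.ofReal (‖f z‖ * tl ν ‖z‖))] with z hz
    have : ENNReal.ofReal (‖f z‖ * tl ν ‖z‖) ≤ ENNReal.ofReal M := by rw [hMw]; exact hz
    exact (ENNReal.ofReal_le_ofReal_iff hM0).1 this
  -- main estimate
  have hlint : ∀ z ∈ unitDisc, ∫⁻ ζ in unitDisc, ‖bInt (sw N) f z ζ‖ₑ ≤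
      ENNReal.ofReal (M * (N + 1) * A * (tl ν ‖z‖)⁻¹ * K) := by
    intro z hz
    have hz' := mem_unitDisc.1 hz
    have htz := tlnorm_pos hν hz
    calc ∫⁻ ζ in unitDisc, ‖bInt (sw N) f z ζ‖ₑ ≤ ∫⁻ ζ in unitDisc,
          ENNReal.ofReal (M * (N + 1) * A * (tl ν ‖z‖)⁻¹) * (ENNReal.ofReal (Phi N α z ζ) + ENNReal.ofReal (Phi N N z ζ)) := by
          apply lintegral_mono_ae
          filter_upwards [hfb, ae_restrict_mem meas_unitDisc] with ζ hζb hζ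
          have hζ' := mem_unitDisc.1 hζ
          have htζ := tlnorm_pos hν hζ
          have hsw : 0 ≤ sw N ‖ζ‖ := (sw_rw N).1 _ ⟨norm_nonneg _, hζ'⟩
          have hx : 0 ≤ (1 - ‖z‖) / (1 - ‖ζ‖) := div_nonneg (by linarith) (by linarith)
          have hPhi : ∀ a : ℝ, 0 ≤ Phi N a z ζ := by
            intro a; unfold Phi; positivity
          rw [← ENNReal.ofReal_add (hPhi _) (hPhi _), ← ENNReal.ofReal_mul (by positivity), ← ofReal_norm]
          apply ENNReal.ofReal_le_ofReal
          rw [sw_bInt_eq N f hz' hζ', norm_mul, norm_mul, norm_div, norm_pow, norm_one_sub_conj,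
            Complex.norm_real, Real.norm_of_nonneg hsw]
          have e1 : ‖(N:ℂ) + 1‖ = (N:ℝ) + 1 := by exact_mod_cast Complex.norm_natCast (N + 1)
          rw [e1]
          have h1 : ‖f ζ‖ ≤ M * (tl ν ‖ζ‖)⁻¹ := by
            rw [← div_eq_mul_inv, le_div_iff₀ htζ]; exact hζb
          have h2 := hcomp ‖z‖ ‖ζ‖ (norm_nonneg _) hz' (norm_nonneg _) hζ'
          calc ‖f ζ‖ * sw N ‖ζ‖ * (((N:ℝ) + 1) / ‖1 - starRingEnd ℂ z * ζ‖ ^ (N + 2))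
              ≤ (M * (A * (tl ν ‖z‖)⁻¹ * (((1 - ‖z‖) / (1 - ‖ζ‖)) ^ α + ((1 - ‖z‖) / (1 - ‖ζ‖)) ^ (N:ℝ)))) * sw N ‖ζ‖ *
                (((N:ℝ) + 1) / ‖1 - starRingEnd ℂ z * ζ‖ ^ (N + 2)) := by
                gcongr
                exact h1.trans (by gcongr)
            _ = _ := by unfold Phi; ring
      _ = ENNReal.ofReal (M * (N + 1) * A * (tl ν ‖z‖)⁻¹) *
          ((∫⁻ ζ in unitDisc, ENNReal.ofReal (Phi N α z ζ)) + ∫⁻ ζ in unitDisc, ENNReal.ofReal (Phi N N z ζ)) := by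
          rw [lintegral_const_mul' _ _ ENNReal.ofReal_ne_top,
            lintegral_add_left (Phi_meas N α z).ennreal_ofReal]
      _ ≤ _ := by
          rw [ENNReal.ofReal_mul (by positivity : 0 ≤ M * (N + 1) * A * (tl ν ‖z‖)⁻¹), hK, ENNReal.ofReal_add (by positivity) (by positivity)]
          gcongr
          · exact Phi_lint N hα0 (by linarith) hz'
          · exact Phi_lint N (by linarith) le_rfl hz'
  have hint : ∀ z ∈ unitDisc, IntegrableOn (bInt (sw N) f z) unitDisc := by
    intro z hz
    refine ⟨?_, (hlint z hz).trans_lt ENNReal.ofReal_lt_top⟩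
    have hm : AEStronglyMeasurable (fun ζ => f ζ * ((sw N ‖ζ‖ : ℝ) : ℂ) *
        (((N:ℂ) + 1) / (1 - z * starRingEnd ℂ ζ) ^ (N + 2))) (volume.restrict unitDisc) := by
      refine (hfm.mul ?_).mul ?_
      · have := sw_cont N
        exact (by fun_prop : Continuous fun ζ : ℂ => ((sw N ‖ζ‖ : ℝ) : ℂ)).aestronglyMeasurable
      · exact (by fun_prop : Measurable fun ζ : ℂ => ((N:ℂ) + 1) / (1 - z * starRingEnd ℂ ζ) ^ (N + 2)).aestronglyMeasurable
    refine hm.congr ?_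
    filter_upwards [ae_restrict_mem meas_unitDisc] with ζ hζ
    exact (sw_bInt_eq N f (mem_unitDisc.1 hz) (mem_unitDisc.1 hζ)).symm
  refine ⟨hint, sw_diff N f (int_of_bInt (sw_rw N) (hint 0 (by simp [mem_unitDisc]))), ?_⟩
  rw [← hMw, ← ENNReal.ofReal_mul (by positivity)]
  apply wSup_le_of
  intro z hz
  have htz := tlnorm_pos hν hz
  have h1 : ‖∫ ζ in unitDisc, bInt (sw N) f z ζ‖ ≤ M * (N + 1) * A * (tl ν ‖z‖)⁻¹ * K := by
    have h2 := (enorm_integral_le_lintegral_enorm (μ := volume.restrict unitDisc) (bInt (sw N) f z)).trans (hlint z hz)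
    rw [← ofReal_norm] at h2
    exact (ENNReal.ofReal_le_ofReal_iff (by positivity)).1 h2
  unfold bProj
  rw [norm_mul, norm_inv, Complex.norm_real, Real.norm_of_nonneg hπ.le]
  calc Real.pi⁻¹ * ‖∫ ζ in unitDisc, bInt (sw N) f z ζ‖ * tl ν ‖z‖
      ≤ Real.pi⁻¹ * (M * (N + 1) * A * (tl ν ‖z‖)⁻¹ * K) * tl ν ‖z‖ := by gcongr
    _ = C * M * ((tl ν ‖z‖)⁻¹ * tl ν ‖z‖) := by rw [hC]; ring
    _ = C * M := by rw [inv_mul_cancel₀ htz.ne', mul_one]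

end

/-- Corollary: for `ν ∈ D̂`, there exists a radial weight `ω` with
`P_ω : L^∞_ν̂ → H^∞_ν̂` bounded iff `ν ∈ Ď`; in particular, if `ν ∈ D̂ \ Ď`,
no radial weight `ω` gives a bounded projection. -/
theorem stmt1 (ν : ℝ → ℝ) (hν : IsRadialWeight ν) (hνD : Dhat ν) :
    ((∃ ω : ℝ → ℝ, IsRadialWeight ω ∧ ProjBddH ω (tl ν)) ↔ Dcheck ν) ∧
    (¬ Dcheck ν → ∀ ω : ℝ → ℝ, IsRadialWeight ω → ¬ ProjBddH ω (tl ν)) := by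
  refine ⟨⟨?_, fun hc => sufficiency hν hνD hc⟩, fun hc ω hω hP => hc (necessity hν hνD hω hP)⟩
  rintro ⟨ω, hω, hP⟩
  exact necessity hν hνD hω hP
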